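/- For all n ≥ 1, β_n = (n+1)! - (n+1)·d_n - d_{n+1}. -/

import Mathlib

open Classical

noncomputable section

/-- `π` has at least one fixed point. -/
def hasFP {n : ℕ} (π : Equiv.Perm (Fin n)) : Prop := ∃ i, π i = i

/-- The set of (1-based) values of the fixed points of `π`, viewing a permutation of
`Fin n` as a permutation of `[n] = {1, …, n}` via `i ↦ i + 1`. -/
def fixVals {n : ℕ} (π : Equiv.Perm (Fin n)) : Set ℕ :=
  {k | ∃ i : Fin n, π i = i ∧ (i : ℕ) + 1 = k}

/-- The largest fixed point `ℓ(π)` (in 1-based indexing). -/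
def lfp {n : ℕ} (π : Equiv.Perm (Fin n)) : ℕ := sSup (fixVals π)

/-- The smallest fixed point `s(π)` (in 1-based indexing). -/
def sfp {n : ℕ} (π : Equiv.Perm (Fin n)) : ℕ := sInf (fixVals π)

/-- `d n` is the number of derangements of `[n]`. -/
def d (n : ℕ) : ℕ := Set.ncard {π : Equiv.Perm (Fin n) | ∀ i, π i ≠ i}

/-- `a n k` is the number of permutations of `[n]` with at least one fixed point
whose largest fixed point equals `k`. -/
def a (n k : ℕ) : ℕ := Set.ncard {π : Equiv.Perm (Fin n) | hasFP π ∧ lfp π = k}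

/-- `b n k` is the number of permutations of `[n]` with at least one fixed point
whose smallest fixed point equals `k`. -/
def b (n k : ℕ) : ℕ := Set.ncard {π : Equiv.Perm (Fin n) | hasFP π ∧ sfp π = k}

/-- `alpha n` is the sum of the largest fixed points over all non-derangements of `[n]`. -/
def alpha (n : ℕ) : ℕ :=
  ∑ π ∈ Finset.univ.filter (fun π : Equiv.Perm (Fin n) => hasFP π), lfp π

/-- `beta n` is the sum of the smallest fixed points over all non-derangements of `[n]`. -/
def beta (n : ℕ) : ℕ :=
  ∑ π ∈ Finset.univ.filter (fun π : Equiv.Perm (Fin n) => hasFP π), sfp π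

/-
Every permutation of `[n + 1]` with a fixed point arises exactly once by inserting a new fixed point
into a permutation `π` of `[n]` at a position where it becomes the smallest one. If `π` has a fixed
point there are `s(π)` such positions, and if `π` is a derangement all `n + 1` positions qualify, so
`(n + 1)! - d_{n+1} = β_n + (n + 1) d_n`.
-/

section

open Equiv Finset Function

variable {n : ℕ}

lemma exists_isLeast_fixedPoints {π : Perm (Fin n)} (h : hasFP π) :
    ∃ i, IsLeast (fixedPoints π) i :=
  (Set.toFinite _).isCompact.exists_isLeast h

lemma sfp_eq_of_isLeast_fixedPoints {π : Perm (Fin n)} {i : Fin n}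
    (h : IsLeast (fixedPoints π) i) : sfp π = i + 1 :=
  have val_add_one_mono : Monotone fun j : Fin n => (j : ℕ) + 1 :=
    fun _ _ hjk => Nat.succ_le_succ hjk
  (val_add_one_mono.map_isLeast h).csInf_eq

lemma card_filter_not_hasFP (n : ℕ) : #{π : Perm (Fin n) | ¬ hasFP π} = d n := by
  rw [d, Set.ncard_eq_toFinset_card']
  congr 1
  ext π
  simp [hasFP]

lemma card_filter_hasFP_add_d (n : ℕ) : #{π : Perm (Fin n) | hasFP π} + d n = n.factorial := by
  rw [← card_filter_not_hasFP, card_filter_add_card_filter_not, card_univ, Fintype.card_perm,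
    Fintype.card_fin]

/-- The permutation of `Fin (n + 1)` obtained from `π` by inserting a fixed point at `p`: the points
other than `p`, relabelled in increasing order by `Fin n`, are permuted by `π`. -/
def insertFixedPoint (p : Fin (n + 1)) (π : Perm (Fin n)) : Perm (Fin (n + 1)) :=
  π.extendDomain (finSuccAboveEquiv p)

lemma insertFixedPoint_apply_self (p : Fin (n + 1)) (π : Perm (Fin n)) :
    insertFixedPoint p π p = p :=
  π.extendDomain_apply_not_subtype _ (not_not_intro rfl)

lemma insertFixedPoint_apply_succAbove (p : Fin (n + 1)) (π : Perm (Fin n)) (i : Fin n) :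
    insertFixedPoint p π (p.succAbove i) = p.succAbove (π i) :=
  π.extendDomain_apply_image (finSuccAboveEquiv p) i

lemma insertFixedPoint_injective (p : Fin (n + 1)) : Injective (insertFixedPoint p) :=
  Perm.extendDomainHom_injective (finSuccAboveEquiv p)

lemma exists_insertFixedPoint_eq {p : Fin (n + 1)} {σ : Perm (Fin (n + 1))} (h : σ p = p) :
    ∃ π, insertFixedPoint p π = σ := by
  have apply_ne_iff (j : Fin (n + 1)) : σ j ≠ p ↔ j ≠ p := σ.injective.ne_iff' h
  refine ⟨(finSuccAboveEquiv p).symm.permCongr (σ.subtypePerm apply_ne_iff), ?_⟩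
  ext1 j
  obtain rfl | ⟨i, rfl⟩ := Fin.eq_self_or_eq_succAbove p j
  · rw [insertFixedPoint_apply_self, h]
  · rw [insertFixedPoint_apply_succAbove]
    exact congrArg Subtype.val ((finSuccAboveEquiv p).apply_symm_apply _)

/-- The positions at which a fixed point can be inserted into `π` so that it becomes the smallest
fixed point. -/
def leastInsertions (π : Perm (Fin n)) : Finset (Fin (n + 1)) :=
  {p | IsLeast (fixedPoints (insertFixedPoint p π)) p}

lemma mem_leastInsertions {π : Perm (Fin n)} {p : Fin (n + 1)} :
    p ∈ leastInsertions π ↔ ∀ i ∈ fixedPoints π, p ≤ i.castSucc := by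
  have self_mem_fixedPoints : p ∈ fixedPoints (insertFixedPoint p π) :=
    insertFixedPoint_apply_self p π
  have succAbove_mem_fixedPoints_iff (i : Fin n) :
      p.succAbove i ∈ fixedPoints (insertFixedPoint p π) ↔ i ∈ fixedPoints π := by
    simp only [mem_fixedPoints, IsFixedPt, insertFixedPoint_apply_succAbove,
      Fin.succAbove_right_inj]
  have le_succAbove_iff (i : Fin n) : p ≤ p.succAbove i ↔ p ≤ i.castSucc := by
    simp only [← not_lt, Fin.succAbove_lt_iff_castSucc_lt]
  simp only [leastInsertions, mem_filter_univ, IsLeast, mem_lowerBounds,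
    Fin.forall_iff_succAbove p, self_mem_fixedPoints, succAbove_mem_fixedPoints_iff,
    le_succAbove_iff, le_refl, implies_true, true_and]

lemma card_leastInsertions_of_hasFP {π : Perm (Fin n)} (h : hasFP π) :
    #(leastInsertions π) = sfp π := by
  obtain ⟨i, hi⟩ := exists_isLeast_fixedPoints h
  have leastInsertions_eq : leastInsertions π = Iic i.castSucc := by
    ext p
    rw [mem_leastInsertions, mem_Iic]
    exact ⟨fun hp => hp i hi.1, fun hp j hj => hp.trans (Fin.castSucc_le_castSucc_iff.2 (hi.2 hj))⟩
  rw [leastInsertions_eq, Fin.card_Iic, Fin.val_castSucc, sfp_eq_of_isLeast_fixedPoints hi]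

lemma card_leastInsertions_of_not_hasFP {π : Perm (Fin n)} (h : ¬ hasFP π) :
    #(leastInsertions π) = n + 1 := by
  have leastInsertions_eq : leastInsertions π = univ :=
    eq_univ_of_forall fun _ => mem_leastInsertions.2 fun i hi => absurd ⟨i, hi⟩ h
  rw [leastInsertions_eq, card_univ, Fintype.card_fin]

lemma sum_card_leastInsertions (n : ℕ) :
    ∑ π : Perm (Fin n), #(leastInsertions π) = beta n + (n + 1) * d n := by
  rw [← sum_filter_add_sum_filter_not univ hasFP, beta]
  congr 1
  · exact sum_congr rfl fun π hπ => card_leastInsertions_of_hasFP (mem_filter_univ π |>.1 hπ)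
  · rw [sum_const_nat fun π hπ => card_leastInsertions_of_not_hasFP (mem_filter_univ π |>.1 hπ),
      card_filter_not_hasFP, mul_comm]

lemma card_filter_hasFP_succ (n : ℕ) :
    #{σ : Perm (Fin (n + 1)) | hasFP σ} = ∑ π : Perm (Fin n), #(leastInsertions π) := by
  rw [← card_sigma]
  symm
  refine card_bij (fun x _ => insertFixedPoint x.2 x.1) ?maps_to ?injective ?surjective
  case maps_to =>
    rintro ⟨π, p⟩ -
    exact mem_filter_univ _ |>.2 ⟨p, insertFixedPoint_apply_self p π⟩
  case injective =>
    rintro ⟨π, p⟩ hp ⟨π', p'⟩ hp' (heq : insertFixedPoint p π = insertFixedPoint p' π')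
    have p_least := mem_filter_univ _ |>.1 (mem_sigma.1 hp).2
    have p'_least := mem_filter_univ _ |>.1 (mem_sigma.1 hp').2
    obtain rfl : p = p' := p_least.unique (heq ▸ p'_least)
    rw [insertFixedPoint_injective p heq]
  case surjective =>
    intro σ hσ
    obtain ⟨p, p_least⟩ := exists_isLeast_fixedPoints (mem_filter_univ σ |>.1 hσ)
    obtain ⟨π, rfl⟩ := exists_insertFixedPoint_eq p_least.1
    exact ⟨⟨π, p⟩, mem_sigma.2 ⟨mem_univ π, mem_filter_univ p |>.2 p_least⟩, rfl⟩

end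

theorem stmt11 (n : ℕ) (hn : 1 ≤ n) :
    (beta n : ℤ) = (n + 1).factorial - (n + 1) * d n - d (n + 1) := by
  have fixed_add_d := card_filter_hasFP_add_d (n + 1)
  rw [card_filter_hasFP_succ, sum_card_leastInsertions] at fixed_add_d
  rw [← fixed_add_d]
  push_cast
  ring
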